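/- arXiv:2408.11773 — 2 statements merged into one kernel-verified Lean document; each statement's English description precedes it below -/
import Mathlib

section
/- Fix N ≥ 1, q₀ ∈ ℝ, κ ≥ 0 and α > 0. The minimum of F(u,v) = Σ_{t=1}^N (κ u_t Σ_{j=1}^t (u_j + v_j) + α u_t²) + Σ_{t=1}^N (κ v_t Σ_{j=1}^t (u_j + v_j) + α v_t²) over all (u,v) ∈ ℝ^N × ℝ^N with Σ_{t=1}^N u_t = q₀ and Σ_{t=1}^N v_t = q₀ equals 2κ q₀² + 2(κ + α) q₀²/N, attained at the TWAP pair u = v = c with c_t = q₀/N. -/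
open Finset

/-- The joint expected implementation shortfall of the two agents in the two-player
Almgren–Chriss market impact game (`Σ_{j=1}^t` encoded by the sum over `j ∈ Iic t`). -/
noncomputable def jointCost (N : ℕ) (κ α : ℝ) (u v : Fin N → ℝ) : ℝ :=
  (∑ t : Fin N, (κ * u t * (∑ j ∈ Iic t, (u j + v j)) + α * (u t) ^ 2)) +
  (∑ t : Fin N, (κ * v t * (∑ j ∈ Iic t, (u j + v j)) + α * (v t) ^ 2))

/-!
Summing the products `s t * s j` over `j ≤ t` counts every off-diagonal pair once and the diagonal
once, so the permanent impact cost of the aggregate order `s = u + v` is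
`κ / 2 * ((∑ t, s t) ^ 2 + ∑ t, s t ^ 2)`. The first term is fixed by the inventories, and the
parallelogram law diagonalizes what remains as a sum of squares of `u + v` and `u - v`, with
weights `(κ + α) / 2` and `α / 2`. By Cauchy–Schwarz each of these is smallest when its argument is
constant in time.
-/

section CumulativeSums

variable {ι R : Type*} [Fintype ι]

theorem sum_mul_sum_Iic_eq_sum_mul_sum_Ici [Preorder ι] [LocallyFiniteOrderBot ι]
    [LocallyFiniteOrderTop ι] [NonUnitalNonAssocCommSemiring R] (s : ι → R) :
    ∑ t, s t * ∑ j ∈ Iic t, s j = ∑ t, s t * ∑ j ∈ Ici t, s j := by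
  simp only [mul_sum]
  rw [sum_comm' (t' := univ) (s' := Ici) (by simp)]
  simp only [mul_comm]

variable [LinearOrder ι] [LocallyFiniteOrderBot ι] [LocallyFiniteOrderTop ι]

theorem sum_Iic_add_sum_Ici [AddCommMonoid R] (s : ι → R) (t : ι) :
    ∑ j ∈ Iic t, s j + ∑ j ∈ Ici t, s j = ∑ j, s j + s t := by
  have h_union : Iic t ∪ Ici t = univ := by
    ext j
    simp [le_total]
  have h_inter : Iic t ∩ Ici t = {t} := by
    ext j
    simp [le_antisymm_iff]
  rw [← sum_union_inter, h_union, h_inter, sum_singleton]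

theorem two_mul_sum_mul_sum_Iic [CommSemiring R] (s : ι → R) :
    2 * ∑ t, s t * ∑ j ∈ Iic t, s j = (∑ t, s t) ^ 2 + ∑ t, s t ^ 2 := by
  calc 2 * ∑ t, s t * ∑ j ∈ Iic t, s j
      = ∑ t, s t * ∑ j ∈ Iic t, s j + ∑ t, s t * ∑ j ∈ Ici t, s j := by
        rw [two_mul, ← sum_mul_sum_Iic_eq_sum_mul_sum_Ici]
    _ = ∑ t, s t * (∑ j, s j + s t) := by
        simp only [← sum_add_distrib, ← mul_add, sum_Iic_add_sum_Ici]
    _ = (∑ t, s t) ^ 2 + ∑ t, s t ^ 2 := by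
        simp only [mul_add, sum_add_distrib, ← sum_mul, sq]

end CumulativeSums

theorem sq_sum_div_card_le_sum_sq {ι R : Type*} [Field R] [LinearOrder R]
    [IsStrictOrderedRing R] (s : Finset ι) (f : ι → R) :
    (∑ i ∈ s, f i) ^ 2 / #s ≤ ∑ i ∈ s, f i ^ 2 :=
  div_le_of_le_mul₀ (Nat.cast_nonneg _) (sum_nonneg fun i _ => sq_nonneg (f i)) <| by
    rw [mul_comm]
    exact sq_sum_le_card_mul_sum_sq

section JointCost

variable {N : ℕ} (κ α : ℝ)

theorem jointCost_eq_sum_sq (u v : Fin N → ℝ) :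
    jointCost N κ α u v = κ / 2 * (∑ t, u t + ∑ t, v t) ^ 2 +
      ((κ + α) / 2 * ∑ t, (u t + v t) ^ 2 + α / 2 * ∑ t, (u t - v t) ^ 2) := by
  have h_impact := two_mul_sum_mul_sum_Iic fun t => u t + v t
  rw [sum_add_distrib (f := u)] at h_impact
  have h_parallelogram : ∑ t, (u t + v t) ^ 2 + ∑ t, (u t - v t) ^ 2 =
      2 * (∑ t, u t ^ 2 + ∑ t, v t ^ 2) := by
    simp only [← sum_add_distrib, mul_sum]
    exact sum_congr rfl fun t _ => by ring
  calc jointCost N κ α u v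
      = κ * ∑ t, (u t + v t) * ∑ j ∈ Iic t, (u j + v j) +
          α * (∑ t, u t ^ 2 + ∑ t, v t ^ 2) := by
        simp only [jointCost, ← sum_add_distrib, mul_sum (s := univ)]
        exact sum_congr rfl fun t _ => by ring
    _ = κ / 2 * (∑ t, u t + ∑ t, v t) ^ 2 +
          ((κ + α) / 2 * ∑ t, (u t + v t) ^ 2 + α / 2 * ∑ t, (u t - v t) ^ 2) := by
        linear_combination κ / 2 * h_impact - α / 2 * h_parallelogram

variable {κ α} in
theorem le_jointCost (hα : 0 ≤ α) (hκα : 0 ≤ κ + α) (u v : Fin N → ℝ) :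
    κ / 2 * (∑ t, u t + ∑ t, v t) ^ 2 +
        ((κ + α) / 2 * (∑ t, u t + ∑ t, v t) ^ 2 + α / 2 * (∑ t, u t - ∑ t, v t) ^ 2) / N ≤
      jointCost N κ α u v := by
  have h_add := sq_sum_div_card_le_sum_sq univ fun t => u t + v t
  have h_sub := sq_sum_div_card_le_sum_sq univ fun t => u t - v t
  rw [sum_add_distrib, card_fin] at h_add
  rw [sum_sub_distrib, card_fin] at h_sub
  rw [jointCost_eq_sum_sq, add_div, mul_div_assoc, mul_div_assoc]
  gcongr

theorem sum_twap (hN : N ≠ 0) (q : ℝ) : ∑ _t : Fin N, q / N = q := by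
  rw [Fin.sum_const, nsmul_eq_mul, mul_div_cancel₀ _ (Nat.cast_ne_zero.mpr hN)]

theorem jointCost_twap (hN : N ≠ 0) (p q : ℝ) :
    jointCost N κ α (fun _ => p / N) (fun _ => q / N) =
      κ / 2 * (p + q) ^ 2 + ((κ + α) / 2 * (p + q) ^ 2 + α / 2 * (p - q) ^ 2) / N := by
  rw [jointCost_eq_sum_sq, sum_twap hN, sum_twap hN]
  simp only [Fin.sum_const, nsmul_eq_mul]
  field_simp

end JointCost

theorem jointCost_min_value_general {N : ℕ} (hN : N ≠ 0) (p q : ℝ) {κ α : ℝ}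
    (hα : 0 ≤ α) (hκα : 0 ≤ κ + α) :
    IsLeast {y : ℝ | ∃ u v : Fin N → ℝ,
        (∑ t, u t) = p ∧ (∑ t, v t) = q ∧ y = jointCost N κ α u v}
      (κ / 2 * (p + q) ^ 2 + ((κ + α) / 2 * (p + q) ^ 2 + α / 2 * (p - q) ^ 2) / N) ∧
    jointCost N κ α (fun _ => p / N) (fun _ => q / N) =
      κ / 2 * (p + q) ^ 2 + ((κ + α) / 2 * (p + q) ^ 2 + α / 2 * (p - q) ^ 2) / N := by
  have h_twap := jointCost_twap κ α hN p q
  refine ⟨⟨⟨_, _, sum_twap hN p, sum_twap hN q, h_twap.symm⟩, ?_⟩, h_twap⟩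
  rintro y ⟨u, v, rfl, rfl, rfl⟩
  exact le_jointCost hα hκα u v

/-- **Minimum value of the joint cost.** For `N ≥ 1`, `q₀ ∈ ℝ`, `κ ≥ 0`, `α > 0`,
the minimum of `F(u,v)` over all pairs with `Σ u_t = q₀` and `Σ v_t = q₀` equals
`2κq₀² + 2(κ+α)q₀²/N`, and it is attained at the TWAP pair `u = v = c`, `c_t = q₀/N`. -/
theorem jointCost_min_value (N : ℕ) (hN : 1 ≤ N) (q₀ κ α : ℝ)
    (hκ : 0 ≤ κ) (hα : 0 < α)
    (c : Fin N → ℝ) (hc : ∀ t, c t = q₀ / N) :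
    IsLeast {y : ℝ | ∃ u v : Fin N → ℝ,
        (∑ t, u t) = q₀ ∧ (∑ t, v t) = q₀ ∧ y = jointCost N κ α u v}
      (2 * κ * q₀ ^ 2 + 2 * (κ + α) * q₀ ^ 2 / N) ∧
    jointCost N κ α c c = 2 * κ * q₀ ^ 2 + 2 * (κ + α) * q₀ ^ 2 / N := by
  obtain rfl : c = fun _ => q₀ / N := funext hc
  convert jointCost_min_value_general (Nat.one_le_iff_ne_zero.mp hN) q₀ q₀ hα.le (by positivity)
    using 2 <;> ring
end

section
/- Fix N ≥ 1, q₀ ∈ ℝ and real κ, α with α ≥ κ ≥ 0 and α > 0. Define G(u,v) = Σ_{t=1}^N (κ u_t Σ_{j=1}^{t-1} (u_j + v_j) + α u_t²) + Σ_{t=1}^N (κ v_t Σ_{j=1}^{t-1} (u_j + v_j) + α v_t²), where the inner sum over j is empty for t = 1. Then for every (u,v) with Σ u_t = Σ v_t = q₀ one has G(u,v) ≥ G(c,c), where c_t = q₀/N; moreover, if α > κ, then (c,c) is the unique minimizer. -/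
open Finset

/-- The joint expected implementation shortfall of the two agents under the
strict-predecessor impact convention: the inner sum `Σ_{j=1}^{t-1}` (empty for `t = 1`)
is encoded by the sum over `j ∈ Iio t` for `t : Fin N`. -/
noncomputable def jointCostPred (N : ℕ) (κ α : ℝ) (u v : Fin N → ℝ) : ℝ :=
  (∑ t : Fin N, (κ * u t * (∑ j ∈ Iio t, (u j + v j)) + α * (u t) ^ 2)) +
  (∑ t : Fin N, (κ * v t * (∑ j ∈ Iio t, (u j + v j)) + α * (v t) ^ 2))

/-!
In the coordinates `w = u + v` and `d = u - v` the joint cost is diagonal. The strict-predecessor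
sum is half the off-diagonal part of `(∑ w)²`, so
`G(u, v) = κ/2 (∑ w)² + (α - κ)/2 ∑ w² + α/2 ∑ d²`.
Once the combined inventory `∑ w` is fixed, the first term is constant, `∑ w²` is smallest exactly
when `w` is constant, and `∑ d²` exactly when `d = 0`.
-/

section Sums

variable {ι R : Type*}

theorem sq_sum_eq_sum_sq_add_two_mul_sum_lt [LinearOrder ι] [CommSemiring R]
    (s : Finset ι) (f : ι → R) :
    (∑ i ∈ s, f i) ^ 2 = ∑ i ∈ s, f i ^ 2 + 2 * ∑ i ∈ s, f i * ∑ j ∈ s with j < i, f j := by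
  induction s using Finset.induction_on_max with
  | empty => simp
  | insert a s ha ih =>
    have not_mem : a ∉ s := fun h => (ha a h).false
    have below_max : {j ∈ insert a s | j < a} = s := by
      rw [filter_insert, if_neg (lt_irrefl a), filter_true_of_mem ha]
    have below_of_mem (i : ι) (hi : i ∈ s) : {j ∈ insert a s | j < i} = {j ∈ s | j < i} := by
      rw [filter_insert, if_neg (ha i hi).not_gt]
    have old_terms : ∑ i ∈ s, f i * ∑ j ∈ insert a s with j < i, f j =
        ∑ i ∈ s, f i * ∑ j ∈ s with j < i, f j :=
      sum_congr rfl fun i hi => by rw [below_of_mem i hi]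
    rw [sum_insert not_mem, sum_insert not_mem, sum_insert not_mem, below_max, old_terms,
      add_sq, ih]
    ring

theorem sum_sq_eq_card_mul_sq_add_sum_sub_sq [CommRing R] {s : Finset ι} {f : ι → R} {a : R}
    (h : ∑ i ∈ s, f i = #s * a) :
    ∑ i ∈ s, f i ^ 2 = #s * a ^ 2 + ∑ i ∈ s, (f i - a) ^ 2 := by
  simp only [sub_sq, sum_add_distrib, sum_sub_distrib, ← sum_mul, ← mul_sum, h, sum_const,
    nsmul_eq_mul]
  ring

end Sums

section JointCost

variable {N : ℕ}

theorem jointCostPred_eq_add_sub (κ α : ℝ) (u v : Fin N → ℝ) :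
    jointCostPred N κ α u v =
      κ / 2 * (∑ t, (u t + v t)) ^ 2 + (α - κ) / 2 * ∑ t, (u t + v t) ^ 2 +
        α / 2 * ∑ t, (u t - v t) ^ 2 := by
  have impact : jointCostPred N κ α u v =
      κ * ∑ t, (u t + v t) * ∑ j ∈ Iio t, (u j + v j) + α * ∑ t, (u t ^ 2 + v t ^ 2) := by
    simp only [jointCostPred, mul_sum _ _ κ, mul_sum _ _ α, ← sum_add_distrib]
    exact sum_congr rfl fun t _ => by ring
  have square := sq_sum_eq_sum_sq_add_two_mul_sum_lt univ fun t => u t + v t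
  simp only [filter_gt_eq_Iio] at square
  have parallelogram :
      2 * ∑ t, (u t ^ 2 + v t ^ 2) = ∑ t, (u t + v t) ^ 2 + ∑ t, (u t - v t) ^ 2 := by
    rw [mul_sum, ← sum_add_distrib]
    exact sum_congr rfl fun t _ => by ring
  linear_combination impact - κ / 2 * square + α / 2 * parallelogram

theorem jointCostPred_eq_const_add {u v : Fin N → ℝ} {a : ℝ} (κ α : ℝ)
    (h : ∑ t, (u t + v t) = N * (2 * a)) :
    jointCostPred N κ α u v =
      jointCostPred N κ α (fun _ => a) (fun _ => a) +
        (α - κ) / 2 * ∑ t, (u t + v t - 2 * a) ^ 2 + α / 2 * ∑ t, (u t - v t) ^ 2 := by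
  have deviation : ∑ t, (u t + v t) ^ 2 = N * (2 * a) ^ 2 + ∑ t, (u t + v t - 2 * a) ^ 2 := by
    simpa only [card_univ, Fintype.card_fin] using
      sum_sq_eq_card_mul_sq_add_sum_sub_sq (s := univ) (f := fun t => u t + v t) (a := 2 * a)
        (by simpa only [card_univ, Fintype.card_fin] using h)
  have const_cost : jointCostPred N κ α (fun _ => a) (fun _ => a) =
      κ / 2 * (N * (2 * a)) ^ 2 + (α - κ) / 2 * (N * (2 * a) ^ 2) := by
    simp [jointCostPred_eq_add_sub, ← two_mul]
  rw [jointCostPred_eq_add_sub, h, deviation, const_cost]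
  ring

theorem jointCostPred_const_le {u v : Fin N → ℝ} {a κ α : ℝ} (hκα : κ ≤ α) (hα : 0 ≤ α)
    (h : ∑ t, (u t + v t) = N * (2 * a)) :
    jointCostPred N κ α (fun _ => a) (fun _ => a) ≤ jointCostPred N κ α u v := by
  have : 0 ≤ α - κ := sub_nonneg.2 hκα
  rw [jointCostPred_eq_const_add κ α h, add_assoc]
  exact le_add_of_nonneg_right (by positivity)

theorem eq_const_of_jointCostPred_eq {u v : Fin N → ℝ} {a κ α : ℝ} (hκα : κ < α) (hα : 0 < α)
    (h : ∑ t, (u t + v t) = N * (2 * a))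
    (hcost : jointCostPred N κ α u v = jointCostPred N κ α (fun _ => a) (fun _ => a)) :
    u = (fun _ => a) ∧ v = (fun _ => a) := by
  have hακ : 0 < α - κ := sub_pos.2 hκα
  rw [jointCostPred_eq_const_add κ α h, add_assoc, add_eq_left,
    add_eq_zero_iff_of_nonneg (by positivity) (by positivity)] at hcost
  obtain ⟨hadd, hsub⟩ := hcost
  have add_eq : ∀ t, u t + v t - 2 * a = 0 := by
    simpa [hακ.ne', sum_eq_zero_iff_of_nonneg, sq_nonneg] using hadd
  have sub_eq : ∀ t, u t - v t = 0 := by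
    simpa [hα.ne', sum_eq_zero_iff_of_nonneg, sq_nonneg] using hsub
  exact ⟨funext fun t => by linarith [add_eq t, sub_eq t],
    funext fun t => by linarith [add_eq t, sub_eq t]⟩

end JointCost

theorem twap_min_pred_general (N : ℕ) (hN : 1 ≤ N) (q₀ κ α : ℝ) (hκα : κ ≤ α) (hα : 0 < α)
    (c : Fin N → ℝ) (hc : ∀ t, c t = q₀ / N) :
    (∀ u v : Fin N → ℝ, ∑ t, (u t + v t) = 2 * q₀ →
        jointCostPred N κ α c c ≤ jointCostPred N κ α u v) ∧
    (κ < α → ∀ u v : Fin N → ℝ, ∑ t, (u t + v t) = 2 * q₀ →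
        jointCostPred N κ α u v = jointCostPred N κ α c c → u = c ∧ v = c) := by
  obtain rfl : c = fun _ => q₀ / N := funext hc
  have hN₀ : (N : ℝ) ≠ 0 := Nat.cast_ne_zero.2 (Nat.one_le_iff_ne_zero.1 hN)
  have total : 2 * q₀ = N * (2 * (q₀ / N)) := by field_simp
  exact ⟨fun u v h => jointCostPred_const_le hκα hα.le (h.trans total),
    fun hlt u v h => eq_const_of_jointCostPred_eq hlt hα (h.trans total)⟩

/-- **Pareto optimal strategy under the strict-predecessor convention.**
Fix `N ≥ 1`, `q₀ ∈ ℝ` and `α ≥ κ ≥ 0` with `α > 0`. Then for every pair `(u,v)` with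
`Σ u_t = Σ v_t = q₀` one has `G(u,v) ≥ G(c,c)`, where `c_t = q₀/N` is the TWAP vector;
moreover, if `α > κ`, the TWAP pair is the unique minimizer. -/
theorem twap_min_pred (N : ℕ) (hN : 1 ≤ N) (q₀ κ α : ℝ)
    (hκ : 0 ≤ κ) (hκα : κ ≤ α) (hα : 0 < α)
    (c : Fin N → ℝ) (hc : ∀ t, c t = q₀ / N) :
    (∀ u v : Fin N → ℝ, (∑ t, u t) = q₀ → (∑ t, v t) = q₀ →
        jointCostPred N κ α c c ≤ jointCostPred N κ α u v) ∧
    (κ < α → ∀ u v : Fin N → ℝ, (∑ t, u t) = q₀ → (∑ t, v t) = q₀ →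
        jointCostPred N κ α u v = jointCostPred N κ α c c → u = c ∧ v = c) := by
  obtain ⟨minimal, unique⟩ := twap_min_pred_general N hN q₀ κ α hκα hα c hc
  have total {u v : Fin N → ℝ} (hu : ∑ t, u t = q₀) (hv : ∑ t, v t = q₀) :
      ∑ t, (u t + v t) = 2 * q₀ := by rw [sum_add_distrib, hu, hv, two_mul]
  exact ⟨fun u v hu hv => minimal u v (total hu hv),
    fun hlt u v hu hv => unique hlt u v (total hu hv)⟩
end
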